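/- arXiv:2501.15312 — 2 statements merged into one kernel-verified Lean document; each statement's English description precedes it below -/
import Mathlib

section
/- Let C_n denote the output of the greedy clique algorithm applied to the Erdős–Rényi random graph G(n,1/2). Then |C_n| / log₂ n converges to 1 in probability as n → ∞; in particular, for every ε > 0, whp the greedy algorithm produces a clique of size at least (1−ε)·log₂ n, i.e., roughly half of the optimal clique size 2(1+o(1))·log₂ n. -/
open MeasureTheory Filter Topology

open scoped Classical in
/-- The uniform probability measure on a finite type: normalized counting measure. -/
noncomputable def uniformMeasure (α : Type*) [Fintype α] [MeasurableSpace α] :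
    Measure α :=
  (Fintype.card α : ENNReal)⁻¹ • Measure.count

open scoped Classical in
/-- The greedy clique algorithm: process the vertices `0,1,…,n-1` in increasing
order, maintaining a clique `C` initialized to `∅`, and add vertex `v` to `C`
iff `v` is adjacent to every vertex currently in `C`.  Here
`ω : Sym2 (Fin n) → Bool` encodes the edge indicators of the graph. -/
noncomputable def greedyClique (n : ℕ) (ω : Sym2 (Fin n) → Bool) : Finset (Fin n) :=
  (List.finRange n).foldl
    (fun C v => if ∀ u ∈ C, ω s(u, v) = true then insert v C else C) ∅

/-!
Let `C` be the greedy clique built from the first `k` vertices. Whether the next vertex `v` joins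
depends only on the `|C|` edges from `v` to `C`, which are independent of `C`; so `|C|` increases
by one with conditional probability `2 ^ (-|C|)`. Hence `𝔼 2 ^ |C|` increases by exactly `1` at
each step, while `m = 𝔼 2 ^ (-|C|)` becomes `m - 𝔼 4 ^ (-|C|) / 2 ≤ m - m ^ 2 / 2`. This gives
`𝔼 2 ^ |C| = k + 1` and `𝔼 2 ^ (-|C|) ≤ 2 / (k + 2)`, and Markov's inequality for each of the two
moments confines `|C|` to `(1 ± ε) log₂ k`.
-/

open scoped BigOperators ENNReal

section UniformMeasure

variable {α : Type*} [Fintype α] [MeasurableSpace α]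

lemma uniformMeasure_eq_uniformOn_univ :
    uniformMeasure α = ProbabilityTheory.uniformOn Set.univ := by
  ext s
  rw [ProbabilityTheory.uniformOn_univ, uniformMeasure, Measure.smul_apply, smul_eq_mul,
    ENNReal.div_eq_inv_mul]

instance isProbabilityMeasure_uniformMeasure [Nonempty α] :
    IsProbabilityMeasure (uniformMeasure α) := by
  rw [uniformMeasure_eq_uniformOn_univ]
  infer_instance

variable [MeasurableSingletonClass α]

lemma integral_uniformMeasure (f : α → ℝ) : ∫ a, f a ∂uniformMeasure α = 𝔼 a, f a := by
  rw [uniformMeasure, integral_smul_measure, integral_count, ENNReal.toReal_inv,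
    ENNReal.toReal_natCast, smul_eq_mul, Fintype.expect_eq_sum_div_card, inv_mul_eq_div]

lemma uniformMeasure_setOf_le_le_expect_div [Nonempty α] {f : α → ℝ} (hf : ∀ a, 0 ≤ f a) {c : ℝ}
    (hc : 0 < c) : uniformMeasure α {a | c ≤ f a} ≤ ENNReal.ofReal ((𝔼 a, f a) / c) := by
  rw [← ofReal_measureReal]
  apply ENNReal.ofReal_le_ofReal
  rw [le_div_iff₀' hc, ← integral_uniformMeasure]
  exact mul_meas_ge_le_integral_of_nonneg (Eventually.of_forall hf) .of_finite c

end UniformMeasure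

lemma sq_expect_le_expect_sq {α : Type*} [Fintype α] [Nonempty α] (f : α → ℝ) :
    (𝔼 a, f a) ^ 2 ≤ 𝔼 a, f a ^ 2 := by
  simpa using Finset.expect_mul_sq_le_sq_mul_sq Finset.univ f 1

section IndependentBits

variable {ι : Type*} [Fintype ι] [DecidableEq ι]

lemma expect_ite_of_dependsOn_compl_singleton {i : ι} {g : (ι → Bool) → ℝ}
    (hg : DependsOn g {i}ᶜ) :
    𝔼 ω : ι → Bool, (if ω i = true then g ω else 0) = 1 / 2 * 𝔼 ω, g ω := by
  let flip : (ι → Bool) → ι → Bool := fun ω => Function.update ω i (!ω i)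
  have flip_involutive : Function.Involutive flip := fun ω => by simp [flip]
  have g_flip (ω) : g (flip ω) = g ω :=
    hg fun j hj => Function.update_of_ne hj _ _
  have expect_eq_flip : 𝔼 ω : ι → Bool, (if ω i = true then g ω else 0) =
      𝔼 ω : ι → Bool, (if ω i = true then 0 else g ω) := by
    refine Fintype.expect_equiv flip_involutive.toPerm _ _ fun ω => ?_
    rw [flip_involutive.coe_toPerm, g_flip]
    cases hω : ω i <;> simp [flip, hω]
  have expect_add : 𝔼 ω : ι → Bool, (if ω i = true then g ω else 0) +
      𝔼 ω : ι → Bool, (if ω i = true then 0 else g ω) = 𝔼 ω, g ω := by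
    rw [← Finset.expect_add_distrib]
    exact Finset.expect_congr rfl fun ω _ => by split_ifs <;> simp
  linarith

lemma expect_ite_forall_mem_of_dependsOn_compl {T : Finset ι} {g : (ι → Bool) → ℝ}
    (hg : DependsOn g (T : Set ι)ᶜ) :
    𝔼 ω : ι → Bool, (if ∀ i ∈ T, ω i = true then g ω else 0) =
      (1 / 2) ^ T.card * 𝔼 ω, g ω := by
  induction T using Finset.induction_on generalizing g with
  | empty => simp
  | insert i T hi ih =>
    have hgi : DependsOn g {i}ᶜ := hg.mono (by simp)
    have hgT : DependsOn (fun ω => if ω i = true then g ω else 0) (T : Set ι)ᶜ := by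
      intro ω ω' h
      have hωi : ω i = ω' i := h i hi
      have hgω : g ω = g ω' := hg fun j hj => h j fun hjT => hj (Finset.mem_insert_of_mem hjT)
      simp only [hωi, hgω]
    calc 𝔼 ω : ι → Bool, (if ∀ j ∈ insert i T, ω j = true then g ω else 0)
      _ = 𝔼 ω : ι → Bool, (if ∀ j ∈ T, ω j = true then if ω i = true then g ω else 0 else 0) := by
        simp only [Finset.forall_mem_insert, and_comm (a := _ = true), ite_and]
      _ = (1 / 2) ^ T.card * (1 / 2 * 𝔼 ω, g ω) := by
        rw [ih hgT, expect_ite_of_dependsOn_compl_singleton hgi]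
      _ = (1 / 2) ^ (insert i T).card * 𝔼 ω, g ω := by
        rw [Finset.card_insert_of_notMem hi, pow_succ, mul_assoc]

-- The set of examined bits is itself random; conditioning on `X` makes it deterministic.
lemma expect_ite_forall_mem_of_disjoint {β : Type*} {S : Set ι} {X : (ι → Bool) → β}
    (hX : DependsOn X S) {T : β → Finset ι} (hT : ∀ ω, Disjoint S (T (X ω))) (F : β → ℝ) :
    𝔼 ω : ι → Bool, (if ∀ i ∈ T (X ω), ω i = true then F (X ω) else 0) =
      𝔼 ω, (1 / 2) ^ (T (X ω)).card * F (X ω) := by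
  classical
  have expect_eq_sum_fiber (f : (ι → Bool) → ℝ) :
      𝔼 ω, f ω = ∑ b ∈ Finset.univ.image X, 𝔼 ω, if X ω = b then f ω else 0 := by
    rw [← Finset.expect_sum_comm]
    exact Finset.expect_congr rfl fun ω _ => by simp
  rw [expect_eq_sum_fiber, expect_eq_sum_fiber fun ω => (1 / 2) ^ (T (X ω)).card * F (X ω)]
  refine Finset.sum_congr rfl fun b hb => ?_
  obtain ⟨ω₀, -, rfl⟩ := Finset.mem_image.1 hb
  have hfiber : DependsOn (fun ω => if X ω = X ω₀ then F (X ω₀) else 0) (T (X ω₀) : Set ι)ᶜ :=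
    fun ω ω' h => by
      simp only [hX fun i hi => h i (Set.disjoint_left.1 (hT ω₀) hi)]
  calc 𝔼 ω, (if X ω = X ω₀ then if ∀ i ∈ T (X ω), ω i = true then F (X ω) else 0 else 0)
    _ = 𝔼 ω, (if ∀ i ∈ T (X ω₀), ω i = true then if X ω = X ω₀ then F (X ω₀) else 0 else 0) :=
      Finset.expect_congr rfl fun ω _ => by
        by_cases h : X ω = X ω₀ <;> simp [h]
    _ = (1 / 2) ^ (T (X ω₀)).card * 𝔼 ω, (if X ω = X ω₀ then F (X ω₀) else 0) :=
      expect_ite_forall_mem_of_dependsOn_compl hfiber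
    _ = 𝔼 ω, (if X ω = X ω₀ then (1 / 2) ^ (T (X ω)).card * F (X ω) else 0) := by
      rw [Finset.mul_expect]
      exact Finset.expect_congr rfl fun ω _ => by
        by_cases h : X ω = X ω₀ <;> simp [h]

end IndependentBits

section GreedyCliqueAlong

variable {V : Type*} [DecidableEq V]

/-- The greedy clique algorithm on an arbitrary vertex type, processing the vertices in the order
in which they appear in the list `l`. Letting `l` grow by one vertex at the end is one step of the
algorithm, which is what makes induction possible. -/
def greedyCliqueAlong (ω : Sym2 V → Bool) (l : List V) : Finset V :=
  l.foldl (fun C v => if ∀ u ∈ C, ω s(u, v) = true then insert v C else C) ∅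

lemma greedyClique_eq_greedyCliqueAlong (n : ℕ) (ω : Sym2 (Fin n) → Bool) :
    greedyClique n ω = greedyCliqueAlong ω (List.finRange n) := by
  unfold greedyClique greedyCliqueAlong
  congr!

lemma greedyCliqueAlong_nil (ω : Sym2 V → Bool) : greedyCliqueAlong ω [] = ∅ :=
  rfl

lemma greedyCliqueAlong_append_singleton (ω : Sym2 V → Bool) (l : List V) (v : V) :
    greedyCliqueAlong ω (l ++ [v]) =
      if ∀ u ∈ greedyCliqueAlong ω l, ω s(u, v) = true then insert v (greedyCliqueAlong ω l)
      else greedyCliqueAlong ω l :=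
  List.foldl_append

lemma mem_of_mem_greedyCliqueAlong {ω : Sym2 V → Bool} {l : List V} {u : V}
    (hu : u ∈ greedyCliqueAlong ω l) : u ∈ l := by
  induction l using List.reverseRecOn with
  | nil => simp [greedyCliqueAlong_nil] at hu
  | append_singleton l v ih =>
    rw [greedyCliqueAlong_append_singleton] at hu
    grind

lemma dependsOn_greedyCliqueAlong (l : List V) :
    DependsOn (fun ω : Sym2 V → Bool => greedyCliqueAlong ω l) {e | ∀ u ∈ e, u ∈ l} := by
  induction l using List.reverseRecOn with
  | nil => exact fun _ _ _ => rfl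
  | append_singleton l v ih =>
    intro ω ω' h
    have same_clique : greedyCliqueAlong ω l = greedyCliqueAlong ω' l :=
      ih fun e he => h e fun u hu => List.mem_append_left _ (he u hu)
    have same_edges : ∀ u ∈ greedyCliqueAlong ω' l, ω s(u, v) = ω' s(u, v) := fun u hu =>
      h _ (by simp [mem_of_mem_greedyCliqueAlong hu])
    simp +contextual only [greedyCliqueAlong_append_singleton, same_clique, same_edges]

lemma card_greedyCliqueAlong_append_singleton (ω : Sym2 V → Bool) {l : List V} {v : V}
    (hv : v ∉ l) :
    (greedyCliqueAlong ω (l ++ [v])).card =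
      if ∀ u ∈ greedyCliqueAlong ω l, ω s(u, v) = true then (greedyCliqueAlong ω l).card + 1
      else (greedyCliqueAlong ω l).card := by
  rw [greedyCliqueAlong_append_singleton, apply_ite Finset.card,
    Finset.card_insert_of_notMem (mt mem_of_mem_greedyCliqueAlong hv)]

variable [Fintype V]

lemma expect_card_greedyCliqueAlong_append_singleton {l : List V} {v : V} (hv : v ∉ l)
    (F : ℕ → ℝ) :
    𝔼 ω : Sym2 V → Bool, F (greedyCliqueAlong ω (l ++ [v])).card =
      𝔼 ω : Sym2 V → Bool, F (greedyCliqueAlong ω l).card +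
        𝔼 ω : Sym2 V → Bool, (1 / 2) ^ (greedyCliqueAlong ω l).card *
          (F ((greedyCliqueAlong ω l).card + 1) - F (greedyCliqueAlong ω l).card) := by
  let edgesTo (C : Finset V) : Finset (Sym2 V) := C.image fun u => s(u, v)
  have card_edgesTo (C : Finset V) : (edgesTo C).card = C.card :=
    Finset.card_image_of_injective C fun _ _ => Sym2.congr_left.1
  have edgesTo_disjoint (ω : Sym2 V → Bool) :
      Disjoint {e : Sym2 V | ∀ u ∈ e, u ∈ l} (edgesTo (greedyCliqueAlong ω l)) := by
    refine Set.disjoint_left.2 fun e he he' => ?_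
    obtain ⟨u, -, rfl⟩ := Finset.mem_image.1 he'
    exact hv (he v (Sym2.mem_mk_right u v))
  have key := expect_ite_forall_mem_of_disjoint (dependsOn_greedyCliqueAlong l) edgesTo_disjoint
    fun C => F (C.card + 1) - F C.card
  simp only [card_edgesTo] at key
  rw [← key, ← Finset.expect_add_distrib]
  refine Finset.expect_congr rfl fun ω _ => ?_
  simp only [card_greedyCliqueAlong_append_singleton ω hv, edgesTo, Finset.forall_mem_image]
  split_ifs <;> ring

lemma expect_two_pow_card_greedyCliqueAlong {l : List V} (hl : l.Nodup) :
    𝔼 ω : Sym2 V → Bool, (2 : ℝ) ^ (greedyCliqueAlong ω l).card = l.length + 1 := by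
  induction l using List.reverseRecOn with
  | nil => simp [greedyCliqueAlong_nil]
  | append_singleton l v ih =>
    rw [← List.concat_eq_append, List.nodup_concat] at hl
    have increment (c : ℕ) : (1 / 2 : ℝ) ^ c * (2 ^ (c + 1) - 2 ^ c) = 1 := by
      rw [pow_succ, mul_two, add_sub_cancel_right, ← mul_pow]
      norm_num
    rw [expect_card_greedyCliqueAlong_append_singleton hl.1 fun c => (2 : ℝ) ^ c, ih hl.2]
    simp only [increment, Fintype.expect_const, List.length_append, List.length_singleton,
      Nat.cast_add, Nat.cast_one]

lemma expect_half_pow_card_greedyCliqueAlong_append_singleton_le {l : List V} {v : V}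
    (hv : v ∉ l) :
    𝔼 ω : Sym2 V → Bool, (1 / 2 : ℝ) ^ (greedyCliqueAlong ω (l ++ [v])).card ≤
      𝔼 ω : Sym2 V → Bool, (1 / 2 : ℝ) ^ (greedyCliqueAlong ω l).card -
        (𝔼 ω : Sym2 V → Bool, (1 / 2 : ℝ) ^ (greedyCliqueAlong ω l).card) ^ 2 / 2 := by
  have increment (c : ℕ) :
      (1 / 2 : ℝ) ^ c * ((1 / 2) ^ (c + 1) - (1 / 2) ^ c) = -(((1 / 2) ^ c) ^ 2 / 2) := by
    ring
  rw [expect_card_greedyCliqueAlong_append_singleton hv fun c => (1 / 2 : ℝ) ^ c]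
  simp only [increment, Finset.expect_neg_distrib, ← Finset.expect_div, ← sub_eq_add_neg]
  gcongr
  exact sq_expect_le_expect_sq _

lemma sub_sq_div_two_le_two_div_add_three {m x : ℝ} (hx : 0 ≤ x) (hm : m ≤ 2 / (x + 2)) :
    m - m ^ 2 / 2 ≤ 2 / (x + 3) := by
  have ha : 2 / (x + 2) ≤ 1 := (div_le_one (by linarith)).2 (by linarith)
  calc m - m ^ 2 / 2
    _ ≤ 2 / (x + 2) - (2 / (x + 2)) ^ 2 / 2 := by
      nlinarith [mul_nonneg (sub_nonneg.2 hm) (by linarith : 0 ≤ 2 - (2 / (x + 2) + m))]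
    _ = 2 * (x + 1) / (x + 2) ^ 2 := by field_simp; ring
    _ ≤ 2 / (x + 3) := by
      rw [div_le_div_iff₀ (by positivity) (by positivity)]
      nlinarith

lemma expect_half_pow_card_greedyCliqueAlong_le {l : List V} (hl : l.Nodup) :
    𝔼 ω : Sym2 V → Bool, (1 / 2 : ℝ) ^ (greedyCliqueAlong ω l).card ≤ 2 / (l.length + 2) := by
  induction l using List.reverseRecOn with
  | nil => simp [greedyCliqueAlong_nil]
  | append_singleton l v ih =>
    rw [← List.concat_eq_append, List.nodup_concat] at hl
    refine (expect_half_pow_card_greedyCliqueAlong_append_singleton_le hl.1).trans ?_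
    have length_add : ((l ++ [v]).length : ℝ) + 2 = l.length + 3 := by
      push_cast [List.length_append, List.length_singleton]
      ring
    rw [length_add]
    exact sub_sq_div_two_le_two_div_add_three l.length.cast_nonneg (ih hl.2)

lemma uniformMeasure_le_card_greedyCliqueAlong_le {l : List V} (hl : l.Nodup) (a : ℝ) :
    uniformMeasure (Sym2 V → Bool) {ω | a ≤ (greedyCliqueAlong ω l).card} ≤
      ENNReal.ofReal ((l.length + 1) / 2 ^ a) := by
  have event_iff (c : ℕ) : a ≤ c ↔ (2 : ℝ) ^ a ≤ 2 ^ c := by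
    rw [← Real.rpow_natCast, Real.rpow_le_rpow_left_iff one_lt_two]
  simp only [event_iff, ← expect_two_pow_card_greedyCliqueAlong hl]
  exact uniformMeasure_setOf_le_le_expect_div (fun ω => by positivity) (by positivity)

lemma uniformMeasure_card_greedyCliqueAlong_le_le {l : List V} (hl : l.Nodup) (a : ℝ) :
    uniformMeasure (Sym2 V → Bool) {ω | ((greedyCliqueAlong ω l).card : ℝ) ≤ a} ≤
      ENNReal.ofReal (2 / (l.length + 2) * 2 ^ a) := by
  have event_iff (c : ℕ) : (c : ℝ) ≤ a ↔ ((2 : ℝ) ^ a)⁻¹ ≤ (1 / 2) ^ c := by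
    rw [one_div, inv_pow, inv_le_inv₀ (by positivity) (by positivity), ← Real.rpow_natCast,
      Real.rpow_le_rpow_left_iff one_lt_two]
  simp only [event_iff]
  refine (uniformMeasure_setOf_le_le_expect_div (fun ω => by positivity) (by positivity)).trans ?_
  rw [div_inv_eq_mul]
  gcongr
  exact expect_half_pow_card_greedyCliqueAlong_le hl

end GreedyCliqueAlong

lemma two_rpow_mul_logb (c : ℝ) {x : ℝ} (hx : 0 < x) : (2 : ℝ) ^ (c * Real.logb 2 x) = x ^ c := by
  rw [mul_comm, Real.rpow_mul zero_le_two, Real.rpow_logb two_pos one_lt_two.ne' hx]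

lemma uniformMeasure_mul_logb_le_card_greedyClique_le {n : ℕ} (hn : n ≠ 0) (ε : ℝ) :
    uniformMeasure (Sym2 (Fin n) → Bool)
      {ω | (1 + ε) * Real.logb 2 n ≤ (greedyClique n ω).card} ≤
      ENNReal.ofReal (2 * (n : ℝ) ^ (-ε)) := by
  have hn0 : (0 : ℝ) < n := by positivity
  have hn1 : (1 : ℝ) ≤ n := Nat.one_le_cast.2 (Nat.pos_of_ne_zero hn)
  simp only [greedyClique_eq_greedyCliqueAlong]
  refine (uniformMeasure_le_card_greedyCliqueAlong_le (List.nodup_finRange n) _).trans ?_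
  rw [List.length_finRange, two_rpow_mul_logb _ hn0]
  apply ENNReal.ofReal_le_ofReal
  calc ((n : ℝ) + 1) / n ^ (1 + ε)
    _ ≤ (2 * n) / n ^ (1 + ε) := by gcongr; linarith
    _ = 2 * (n : ℝ) ^ (-ε) := by
      rw [Real.rpow_add hn0, Real.rpow_one, Real.rpow_neg hn0.le]
      field_simp

lemma uniformMeasure_card_greedyClique_le_mul_logb_le {n : ℕ} (hn : n ≠ 0) (ε : ℝ) :
    uniformMeasure (Sym2 (Fin n) → Bool)
      {ω | ((greedyClique n ω).card : ℝ) ≤ (1 - ε) * Real.logb 2 n} ≤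
      ENNReal.ofReal (2 * (n : ℝ) ^ (-ε)) := by
  have hn0 : (0 : ℝ) < n := by positivity
  simp only [greedyClique_eq_greedyCliqueAlong]
  refine (uniformMeasure_card_greedyCliqueAlong_le_le (List.nodup_finRange n) _).trans ?_
  rw [List.length_finRange, two_rpow_mul_logb _ hn0]
  apply ENNReal.ofReal_le_ofReal
  calc 2 / ((n : ℝ) + 2) * n ^ (1 - ε)
    _ ≤ 2 / (n : ℝ) * n ^ (1 - ε) := by gcongr; linarith
    _ = 2 * (n : ℝ) ^ (-ε) := by
      rw [sub_eq_add_neg, Real.rpow_add hn0, Real.rpow_one]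
      field_simp

lemma tendsto_zero_of_le_ofReal_rpow_neg {ε C : ℝ} (hε : 0 < ε) {p : ℕ → ℝ≥0∞}
    (hp : ∀ n, n ≠ 0 → p n ≤ ENNReal.ofReal (C * (n : ℝ) ^ (-ε))) : Tendsto p atTop (𝓝 0) := by
  have bound_tendsto : Tendsto (fun n : ℕ => ENNReal.ofReal (C * (n : ℝ) ^ (-ε))) atTop (𝓝 0) := by
    simpa using ENNReal.tendsto_ofReal
      (((tendsto_rpow_neg_atTop hε).comp tendsto_natCast_atTop_atTop).const_mul C)
  exact tendsto_of_tendsto_of_tendsto_of_le_of_le' tendsto_const_nhds bound_tendsto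
    (Eventually.of_forall fun _ => zero_le) ((eventually_ne_atTop 0).mono hp)

lemma tendsto_uniformMeasure_mul_logb_le_card_greedyClique {ε : ℝ} (hε : 0 < ε) :
    Tendsto (fun n : ℕ => uniformMeasure (Sym2 (Fin n) → Bool)
      {ω | (1 + ε) * Real.logb 2 n ≤ (greedyClique n ω).card}) atTop (𝓝 0) :=
  tendsto_zero_of_le_ofReal_rpow_neg hε fun _ hn =>
    uniformMeasure_mul_logb_le_card_greedyClique_le hn ε

lemma tendsto_uniformMeasure_card_greedyClique_le_mul_logb {ε : ℝ} (hε : 0 < ε) :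
    Tendsto (fun n : ℕ => uniformMeasure (Sym2 (Fin n) → Bool)
      {ω | ((greedyClique n ω).card : ℝ) ≤ (1 - ε) * Real.logb 2 n}) atTop (𝓝 0) :=
  tendsto_zero_of_le_ofReal_rpow_neg hε fun _ hn =>
    uniformMeasure_card_greedyClique_le_mul_logb_le hn ε

lemma le_or_le_of_lt_abs_div_sub_one {ε c L : ℝ} (hL : 0 < L) (h : ε < |c / L - 1|) :
    (1 + ε) * L ≤ c ∨ c ≤ (1 - ε) * L := by
  rw [← le_div_iff₀ hL, ← div_le_iff₀ hL]
  rcases lt_abs.1 h with h | h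
  · left; linarith
  · right; linarith

lemma tendsto_uniformMeasure_abs_card_greedyClique_div_logb_sub_one {ε : ℝ} (hε : 0 < ε) :
    Tendsto (fun n : ℕ => uniformMeasure (Sym2 (Fin n) → Bool)
      {ω | ε < |((greedyClique n ω).card : ℝ) / Real.logb 2 n - 1|}) atTop (𝓝 0) := by
  have union_bound := (tendsto_uniformMeasure_mul_logb_le_card_greedyClique hε).add
    (tendsto_uniformMeasure_card_greedyClique_le_mul_logb hε)
  rw [add_zero] at union_bound
  refine tendsto_of_tendsto_of_tendsto_of_le_of_le' tendsto_const_nhds union_bound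
    (Eventually.of_forall fun _ => zero_le) ?_
  filter_upwards [eventually_gt_atTop 1] with n hn
  have hL : 0 < Real.logb 2 n := Real.logb_pos one_lt_two (Nat.one_lt_cast.2 hn)
  exact (measure_mono fun ω => le_or_le_of_lt_abs_div_sub_one hL).trans (measure_union_le _ _)

lemma tendsto_measure_compl_one_of_tendsto_zero {κ : Type*} {F : Filter κ} {Ω : κ → Type*}
    [∀ k, MeasurableSpace (Ω k)] {μ : ∀ k, Measure (Ω k)} [∀ k, IsProbabilityMeasure (μ k)]
    {s : ∀ k, Set (Ω k)} (hs : ∀ k, MeasurableSet (s k))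
    (h : Tendsto (fun k => μ k (s k)) F (𝓝 0)) : Tendsto (fun k => μ k (s k)ᶜ) F (𝓝 1) := by
  simp only [prob_compl_eq_one_sub (hs _)]
  simpa using ENNReal.Tendsto.sub tendsto_const_nhds h (.inl ENNReal.one_ne_top)

/-- the size of the clique produced by the greedy algorithm on
`G(n,1/2)` (uniform measure over all graphs on `n` vertices), divided by
`log₂ n`, converges to `1` in probability; in particular for every `ε > 0`,
whp the greedy clique has size at least `(1-ε)·log₂ n`. -/
theorem greedy_clique_half_optimal :
    (∀ ε : ℝ, 0 < ε →
      Tendsto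
        (fun n : ℕ =>
          uniformMeasure (Sym2 (Fin n) → Bool)
            {ω | ε < |((greedyClique n ω).card : ℝ) / Real.logb 2 n - 1|})
        atTop (𝓝 0)) ∧
    (∀ ε : ℝ, 0 < ε →
      Tendsto
        (fun n : ℕ =>
          uniformMeasure (Sym2 (Fin n) → Bool)
            {ω | (1 - ε) * Real.logb 2 n ≤ ((greedyClique n ω).card : ℝ)})
        atTop (𝓝 1)) := by
  refine ⟨fun ε hε => tendsto_uniformMeasure_abs_card_greedyClique_div_logb_sub_one hε,
    fun ε hε => ?_⟩
  have not_small := tendsto_measure_compl_one_of_tendsto_zero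
    (fun n => (Set.toFinite _).measurableSet)
    (tendsto_uniformMeasure_card_greedyClique_le_mul_logb hε)
  refine tendsto_of_tendsto_of_tendsto_of_le_of_le not_small tendsto_const_nhds
    (fun n => measure_mono fun ω hω => ?_) (fun n => prob_le_one)
  exact (not_le.1 (Set.notMem_ofPred_iff.1 hω)).le
end

section
/- For every ε > 0 there exists d₀ such that for every real d ≥ d₀ the following holds: whp as n → ∞, the independence number α(G(n,d/n)) of the sparse Erdős–Rényi random graph satisfies (2−ε)·(log d / d)·n ≤ α(G(n,d/n)) ≤ (2+ε)·(log d / d)·n, where log denotes the natural logarithm. -/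
open MeasureTheory Filter Topology

/-- The Bernoulli measure on `Bool` with success probability `p`
(a probability measure whenever `0 ≤ p ≤ 1`). -/
noncomputable def bernoulliMeasure (p : ℝ) : Measure Bool :=
  ENNReal.ofReal p • Measure.dirac true + ENNReal.ofReal (1 - p) • Measure.dirac false

/-- The Erdős–Rényi measure `G(n,p)`: each of the unordered pairs of vertices is an
edge independently with probability `p`; `ω : Sym2 (Fin n) → Bool` records the
edge indicators. -/
noncomputable def erdosRenyi (n : ℕ) (p : ℝ) : Measure (Sym2 (Fin n) → Bool) :=
  Measure.pi fun _ => bernoulliMeasure p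

/-- A finite vertex set `S` is an independent set of the graph encoded by `ω` if
no pair of distinct vertices of `S` forms an edge. -/
def IsIndepSet (n : ℕ) (ω : Sym2 (Fin n) → Bool) (S : Finset (Fin n)) : Prop :=
  ∀ i ∈ S, ∀ j ∈ S, i ≠ j → ω s(i, j) = false

open scoped Classical in
/-- The independence number: the maximum cardinality of an independent set. -/
noncomputable def independenceNumber (n : ℕ) (ω : Sym2 (Fin n) → Bool) : ℕ :=
  (Finset.univ.filter (fun S : Finset (Fin n) => IsIndepSet n ω S)).sup Finset.card

/-!
The upper bound is the first moment method over vertex sets of size about `(2 + ε) (log d / d) n`.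

For the lower bound the second moment of the number of independent sets of size `k` is too large by
an exponential factor. Following Frieze, partition the vertices into `k` blocks of constant size `m`
and only count independent transversals: two random transversals agree in about `k / m` blocks, so
the second moment is at most `exp (D k / m)` times the square of the first, where `D` bounds the
gain per common vertex. The largest independent partial transversal `Z` changes by at most one when
the edges exposed with one block are changed, hence by bounded differences
`P(Z ≤ (1 - δ) k) P(Z ≥ k) ≤ exp (-δ² k)`. As `P(Z ≥ k) ≥ exp (-D k / m)`, the first factor tends to
zero once `D / m < δ²`. This is possible for large `d`: take `m` slightly above `d / (2 log d)`, so
that `D` can be a power of `d` with exponent below one.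
-/

open ProbabilityTheory hiding bernoulliMeasure
open scoped NNReal

section BoundedDifferences

variable {α β ι κ : Type*} [MeasurableSpace α] [MeasurableSpace β]

theorem hasSubgaussianMGF_of_abs_sub_le {μ : Measure α} [IsProbabilityMeasure μ] {X : α → ℝ}
    (hX : Measurable X) {c : ℝ≥0} (hc : ∀ x y, |X x - X y| ≤ c) :
    HasSubgaussianMGF (fun x => X x - ∫ y, X y ∂μ) ((c / 2) ^ 2) μ := by
  have : Nonempty α := nonempty_of_isProbabilityMeasure μ
  have hbdd : BddBelow (Set.range X) := by
    obtain ⟨x₀⟩ := this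
    refine ⟨X x₀ - c, ?_⟩
    rintro _ ⟨x, rfl⟩
    linarith [(abs_le.1 (hc x x₀)).1]
  have hmem : ∀ x, X x ∈ Set.Icc (⨅ y, X y) ((⨅ y, X y) + c) := fun x => by
    refine ⟨ciInf_le hbdd x, ?_⟩
    have : X x - c ≤ ⨅ y, X y := le_ciInf fun y => by linarith [(abs_le.1 (hc x y)).2]
    linarith
  simpa using hasSubgaussianMGF_of_mem_Icc hX.aemeasurable (ae_of_all μ hmem)

theorem hasSubgaussianMGF_add_prod {μ : Measure α} {ν : Measure β} [SFinite μ]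
    [SFinite ν] {X : α → ℝ} {Y : α × β → ℝ} {c c' : ℝ≥0} (hX : HasSubgaussianMGF X c μ)
    (hYm : Measurable Y) (hY : ∀ a, HasSubgaussianMGF (fun b => Y (a, b)) c' ν) :
    HasSubgaussianMGF (fun z => X z.1 + Y z) (c + c') (μ.prod ν) := by
  have hexp (t : ℝ) (z : α × β) :
      Real.exp (t * (X z.1 + Y z)) = Real.exp (t * X z.1) * Real.exp (t * Y z) := by
    rw [mul_add, Real.exp_add]
  have hmgf (t : ℝ) (a : α) : ∫ b, Real.exp (t * X a) * Real.exp (t * Y (a, b)) ∂ν ≤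
      Real.exp (t * X a) * Real.exp (c' * t ^ 2 / 2) := by
    rw [integral_const_mul]
    exact mul_le_mul_of_nonneg_left ((hY a).mgf_le t) (Real.exp_nonneg _)
  have hmeas (t : ℝ) : AEStronglyMeasurable
      (fun z : α × β => Real.exp (t * X z.1) * Real.exp (t * Y z)) (μ.prod ν) :=
    (hX.integrable_exp_mul t).aestronglyMeasurable.comp_fst.mul
      (hYm.const_mul t).exp.aestronglyMeasurable
  have hint (t : ℝ) : Integrable
      (fun z : α × β => Real.exp (t * X z.1) * Real.exp (t * Y z)) (μ.prod ν) := by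
    refine (integrable_prod_iff (hmeas t)).2
      ⟨ae_of_all _ fun a => ((hY a).integrable_exp_mul t).const_mul (Real.exp (t * X a)), ?_⟩
    refine ((hX.integrable_exp_mul t).mul_const (Real.exp (c' * t ^ 2 / 2))).mono'
      (hmeas t).norm.integral_prod_right' (ae_of_all _ fun a => ?_)
    have hnonneg : 0 ≤ ∫ b, Real.exp (t * X a) * Real.exp (t * Y (a, b)) ∂ν :=
      integral_nonneg fun b => by positivity
    simpa [abs_of_nonneg hnonneg] using hmgf t a
  refine ⟨fun t => by simpa only [hexp] using hint t, fun t => ?_⟩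
  calc mgf (fun z => X z.1 + Y z) (μ.prod ν) t
      = ∫ a, ∫ b, Real.exp (t * X a) * Real.exp (t * Y (a, b)) ∂ν ∂μ := by
        simp only [mgf, hexp]
        exact integral_prod _ (hint t)
    _ ≤ ∫ a, Real.exp (t * X a) * Real.exp (c' * t ^ 2 / 2) ∂μ :=
        integral_mono (hint t).integral_prod_left ((hX.integrable_exp_mul t).mul_const _) (hmgf t)
    _ ≤ Real.exp (c * t ^ 2 / 2) * Real.exp (c' * t ^ 2 / 2) := by
        rw [integral_mul_const]
        exact mul_le_mul_of_nonneg_right (hX.mgf_le t) (Real.exp_nonneg _)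
    _ = Real.exp ((c + c' : ℝ≥0) * t ^ 2 / 2) := by
        rw [← Real.exp_add]
        push_cast
        ring_nf

theorem hasSubgaussianMGF_prod_of_sections {μ : Measure α} {ν : Measure β}
    [IsProbabilityMeasure μ] [IsProbabilityMeasure ν] {f : α × β → ℝ} (hf : Measurable f)
    {c c' : ℝ≥0} (hα : ∀ a a' b, |f (a, b) - f (a', b)| ≤ c)
    (hβ : ∀ a, HasSubgaussianMGF (fun b => f (a, b) - ∫ b', f (a, b') ∂ν) c' ν) :
    HasSubgaussianMGF (fun z => f z - ∫ w, f w ∂μ.prod ν) ((c / 2) ^ 2 + c') (μ.prod ν) := by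
  have hsec (a : α) : Integrable (fun b => f (a, b)) ν :=
    ((hβ a).integrable.add (integrable_const _)).congr (ae_of_all _ fun _ => sub_add_cancel _ _)
  have hFm : Measurable fun a => ∫ b, f (a, b) ∂ν :=
    hf.stronglyMeasurable.integral_prod_right'.measurable
  have hF (a a' : α) : |(∫ b, f (a, b) ∂ν) - ∫ b, f (a', b) ∂ν| ≤ c := by
    rw [← integral_sub (hsec a) (hsec a')]
    simpa using norm_integral_le_of_norm_le_const (μ := ν)
      (ae_of_all _ fun b => (Real.norm_eq_abs _).trans_le (hα a a' b))
  have hsum := hasSubgaussianMGF_add_prod (hasSubgaussianMGF_of_abs_sub_le (μ := μ) hFm hF)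
    (hf.sub (hFm.comp measurable_fst)) hβ
  have hcancel (z : α × β) : (∫ b, f (z.1, b) ∂ν) - (∫ a, ∫ b, f (a, b) ∂ν ∂μ) +
      (f z - ∫ b, f (z.1, b) ∂ν) = f z - ∫ a, ∫ b, f (a, b) ∂ν ∂μ := by ring
  simp only [Pi.sub_apply, Function.comp_apply, hcancel] at hsum
  have hint : Integrable f (μ.prod ν) :=
    (hsum.integrable.add (integrable_const _)).congr (ae_of_all _ fun _ => sub_add_cancel _ _)
  rwa [integral_prod f hint]

theorem hasSubgaussianMGF_pi_of_blockwise_abs_sub_le (s : Finset κ)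
    {c : κ → ℝ≥0} [Fintype ι] {X : ι → Type*} [∀ e, MeasurableSpace (X e)]
    (μ : ∀ e, Measure (X e)) [∀ e, IsProbabilityMeasure (μ e)] {g : ι → κ} (hg : ∀ e, g e ∈ s)
    {f : (∀ e, X e) → ℝ} (hf : Measurable f)
    (hc : ∀ i ∈ s, ∀ x y, (∀ e, g e ≠ i → x e = y e) → |f x - f y| ≤ c i) :
    HasSubgaussianMGF (fun x => f x - ∫ y, f y ∂Measure.pi μ) (∑ i ∈ s, (c i / 2) ^ 2)
      (Measure.pi μ) := by
  classical
  induction s using Finset.induction_on generalizing ι with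
  | empty =>
    have : IsEmpty ι := ⟨fun e => absurd (hg e) (Finset.notMem_empty _)⟩
    have hconst (x) : f x = f default := congrArg f (Subsingleton.elim _ _)
    simp [hconst]
  | insert a s ha ih =>
    let e := MeasurableEquiv.piEquivPiSubtypeProd X fun e => g e = a
    have he : MeasurePreserving e (Measure.pi μ) _ :=
      measurePreserving_piEquivPiSubtypeProd μ fun e => g e = a
    have hfe : Measurable (f ∘ e.symm) := hf.comp e.symm.measurable
    have key := hasSubgaussianMGF_prod_of_sections (f := f ∘ e.symm) (c := c a)
      (μ := Measure.pi fun i : {e // g e = a} => μ i)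
      (ν := Measure.pi fun i : {e // ¬ g e = a} => μ i) hfe
      (fun u u' v => hc a (Finset.mem_insert_self a s) _ _ fun i hi => by
        simp [e, MeasurableEquiv.piEquivPiSubtypeProd, hi])
      (fun u => ih (fun i : {e // ¬ g e = a} => μ i) (g := fun i => g i)
        (fun i => (Finset.mem_insert.1 (hg i)).resolve_left i.2)
        (hfe.comp measurable_prodMk_left)
        fun j hj v v' hv => hc j (Finset.mem_insert_of_mem hj) _ _ fun i hi => by
          by_cases hia : g i = a
          · simp [e, MeasurableEquiv.piEquivPiSubtypeProd, hia]
          · simpa [e, MeasurableEquiv.piEquivPiSubtypeProd, hia] using hv ⟨i, hia⟩ hi)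
    rw [Finset.sum_insert ha]
    rw [← he.map_eq, integral_map_equiv] at key
    simpa [Function.comp_def] using key.of_map he.measurable.aemeasurable

theorem measureReal_le_mul_measureReal_ge_le_exp {μ : Measure α} [IsFiniteMeasure μ] {X : α → ℝ}
    {m : ℝ} {c : ℝ≥0} (hX : HasSubgaussianMGF (fun x => X x - m) c μ) {a b : ℝ} (hab : a ≤ b) :
    μ.real {x | X x ≤ a} * μ.real {x | b ≤ X x} ≤ Real.exp (-(b - a) ^ 2 / (4 * c)) := by
  set t : ℝ := (b - a) / (2 * c) with ht
  have ht0 : 0 ≤ t := div_nonneg (sub_nonneg.2 hab) (by positivity)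
  have hlow : μ.real {x | X x ≤ a} ≤ Real.exp (t * (a - m)) * Real.exp (c * t ^ 2 / 2) := by
    have := measure_le_le_exp_mul_mgf (a - m) (neg_nonpos.2 ht0) (hX.integrable_exp_mul (-t))
    simp only [sub_le_sub_iff_right, neg_neg] at this
    refine this.trans (mul_le_mul_of_nonneg_left ?_ (Real.exp_nonneg _))
    simpa using hX.mgf_le (-t)
  have hupp : μ.real {x | b ≤ X x} ≤ Real.exp (-t * (b - m)) * Real.exp (c * t ^ 2 / 2) := by
    have := measure_ge_le_exp_mul_mgf (b - m) ht0 (hX.integrable_exp_mul t)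
    simp only [sub_le_sub_iff_right] at this
    exact this.trans (mul_le_mul_of_nonneg_left (hX.mgf_le t) (Real.exp_nonneg _))
  refine (mul_le_mul hlow hupp measureReal_nonneg (by positivity)).trans_eq ?_
  simp only [← Real.exp_add]
  rcases eq_or_ne (c : ℝ) 0 with hc | hc
  · simp [ht, hc]
  · congr 1
    rw [ht]
    field_simp
    ring

end BoundedDifferences

section SecondMoment

variable {Ω ι : Type*} [MeasurableSpace Ω] {μ : Measure Ω}

theorem sq_integral_mul_le {f g : Ω → ℝ} (hf : MemLp f 2 μ) (hg : MemLp g 2 μ) :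
    (∫ x, f x * g x ∂μ) ^ 2 ≤ (∫ x, f x ^ 2 ∂μ) * ∫ x, g x ^ 2 ∂μ := by
  have hff : Integrable (fun x => f x ^ 2) μ := hf.integrable_sq
  have hfg : Integrable (fun x => f x * g x) μ := hf.integrable_mul hg
  have hquad (t : ℝ) : 0 ≤ (∫ x, f x ^ 2 ∂μ) * (t * t) + (-2 * ∫ x, f x * g x ∂μ) * t +
      ∫ x, g x ^ 2 ∂μ := by
    calc 0 ≤ ∫ x, (t * f x - g x) ^ 2 ∂μ := integral_nonneg fun x => sq_nonneg _
      _ = ∫ x, t ^ 2 * f x ^ 2 - 2 * t * (f x * g x) + g x ^ 2 ∂μ := by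
        congr 1 with x
        ring
      _ = _ := by
        rw [integral_add (by fun_prop) hg.integrable_sq, integral_sub (by fun_prop) (by fun_prop),
          integral_const_mul, integral_const_mul]
        ring
  have hdiscrim := discrim_le_zero hquad
  rw [discrim] at hdiscrim
  linarith

theorem sq_sum_measureReal_le [IsFiniteMeasure μ] [Fintype ι] {A : ι → Set Ω}
    (hA : ∀ i, MeasurableSet (A i)) :
    (∑ i, μ.real (A i)) ^ 2 ≤ μ.real (⋃ i, A i) * ∑ i, ∑ j, μ.real (A i ∩ A j) := by
  let count : Ω → ℝ := fun ω => ∑ i, (A i).indicator 1 ω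
  let union : Ω → ℝ := (⋃ i, A i).indicator 1
  have hmem {s : Set Ω} (hs : MeasurableSet s) : MemLp (s.indicator (1 : Ω → ℝ)) 2 μ :=
    memLp_indicator_const 2 hs 1 (.inr (measure_ne_top μ s))
  have hint {s : Set Ω} (hs : MeasurableSet s) : Integrable (s.indicator (1 : Ω → ℝ)) μ :=
    (integrable_const 1).indicator hs
  have hmul (ω : Ω) : union ω * count ω = count ω := by
    simp only [union, count, Finset.mul_sum]
    refine Finset.sum_congr rfl fun i _ => ?_
    rw [← Pi.mul_apply, ← Set.inter_indicator_one,
      Set.inter_eq_self_of_subset_right (Set.subset_iUnion A i)]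
  have hunion_sq (ω : Ω) : union ω ^ 2 = union ω := by
    by_cases h : ω ∈ ⋃ i, A i <;> simp [union, h]
  have hcount_sq (ω : Ω) : count ω ^ 2 = ∑ i, ∑ j, (A i ∩ A j).indicator (1 : Ω → ℝ) ω := by
    simp only [count, sq, Finset.sum_mul_sum, Set.inter_indicator_one, Pi.mul_apply]
  have hcs := sq_integral_mul_le (hmem (.iUnion hA))
    (memLp_finsetSum Finset.univ fun i _ => hmem (hA i))
  change (∫ ω, union ω * count ω ∂μ) ^ 2 ≤ (∫ ω, union ω ^ 2 ∂μ) * ∫ ω, count ω ^ 2 ∂μ at hcs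
  simp only [hmul, hunion_sq, hcount_sq] at hcs
  simpa only [count, union, integral_finsetSum _ fun i _ => hint (hA i),
    integral_finsetSum _ fun i _ => integrable_finsetSum _ fun j _ => hint ((hA i).inter (hA j)),
    integral_finsetSum _ fun j _ => hint ((hA _).inter (hA j)),
    integral_indicator_one, hA, MeasurableSet.iUnion hA, (hA _).inter (hA _)] using hcs

end SecondMoment

theorem tendsto_measure_inter_one {ι : Type*} {l : Filter ι} {Ω : ι → Type*}
    [∀ i, MeasurableSpace (Ω i)] {μ : ∀ i, Measure (Ω i)}
    (hμ : ∀ᶠ i in l, IsProbabilityMeasure (μ i)) {s t : ∀ i, Set (Ω i)}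
    (hs : ∀ i, MeasurableSet (s i)) (ht : ∀ i, MeasurableSet (t i))
    (hsc : Tendsto (fun i => (μ i).real (s i)ᶜ) l (𝓝 0))
    (htc : Tendsto (fun i => (μ i).real (t i)ᶜ) l (𝓝 0)) :
    Tendsto (fun i => μ i (s i ∩ t i)) l (𝓝 1) := by
  have hreal : Tendsto (fun i => (μ i).real (s i ∩ t i)) l (𝓝 1) := by
    refine tendsto_of_tendsto_of_tendsto_of_le_of_le' (h := fun _ => 1)
      (by simpa using (hsc.add htc).const_sub 1) tendsto_const_nhds ?_ ?_
    · filter_upwards [hμ] with i _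
      have := measureReal_union_le (μ := μ i) (s i)ᶜ (t i)ᶜ
      rw [← Set.compl_inter, probReal_compl_eq_one_sub ((hs i).inter (ht i))] at this
      linarith
    · filter_upwards [hμ] with i _
      exact measureReal_le_one
  have hfinite : (fun i => ENNReal.ofReal ((μ i).real (s i ∩ t i))) =ᶠ[l]
      fun i => μ i (s i ∩ t i) := by
    filter_upwards [hμ] with i _
    exact ofReal_measureReal
  simpa using (ENNReal.tendsto_ofReal hreal).congr' hfinite

section ElementaryEstimates

theorem sum_pow_card_filter_eq {ι κ R : Type*} [Fintype ι] [DecidableEq ι] [Fintype κ]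
    [DecidableEq κ] [CommRing R] (σ : ι → κ) (D : R) :
    ∑ τ : ι → κ, D ^ (Finset.univ.filter fun i => σ i = τ i).card =
      (Fintype.card κ - 1 + D) ^ Fintype.card ι := by
  have hfactor (i : ι) : ∑ a, (if σ i = a then D else 1) = Fintype.card κ - 1 + D := by
    have (a : κ) : (if σ i = a then D else 1) = 1 + if σ i = a then D - 1 else 0 := by
      split_ifs <;> ring
    simp only [this, Finset.sum_add_distrib, Finset.sum_ite_eq, Finset.mem_univ, if_true,
      Finset.sum_const, Finset.card_univ, nsmul_one]
    ring
  calc ∑ τ : ι → κ, D ^ (Finset.univ.filter fun i => σ i = τ i).card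
      = ∑ τ : ι → κ, ∏ i, if σ i = τ i then D else 1 := by
        simp only [← Finset.prod_filter, Finset.prod_const]
    _ = ∏ i, ∑ a, if σ i = a then D else 1 := by
        rw [Finset.prod_univ_sum, Fintype.piFinset_univ]
    _ = (Fintype.card κ - 1 + D) ^ Fintype.card ι := by
        simp only [hfactor, Finset.prod_const, Finset.card_univ]

theorem choose_le_exp_one_mul_div_pow (n k : ℕ) :
    (n.choose k : ℝ) ≤ (Real.exp 1 * (n / k)) ^ k := by
  rcases eq_or_ne k 0 with rfl | hk
  · simp
  calc (n.choose k : ℝ) ≤ n ^ k / k.factorial := Nat.choose_le_pow_div k n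
    _ = k ^ k / k.factorial * (n / k : ℝ) ^ k := by
        rw [div_pow]
        field_simp
    _ ≤ Real.exp k * (n / k : ℝ) ^ k := by
        gcongr
        exact Real.pow_div_factorial_le_exp _ (Nat.cast_nonneg k) k
    _ = (Real.exp 1 * (n / k)) ^ k := by rw [mul_pow, Real.exp_one_pow]

theorem one_sub_pow_choose_two_le {x : ℝ} (hx : x ≤ 1) (k : ℕ) :
    (1 - x) ^ k.choose 2 ≤ Real.exp (-(x * (k - 1) / 2)) ^ k := by
  calc (1 - x) ^ k.choose 2 ≤ Real.exp (-x) ^ k.choose 2 :=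
        pow_le_pow_left₀ (sub_nonneg.2 hx) (Real.one_sub_le_exp_neg x) _
    _ = Real.exp (-(x * (k - 1) / 2)) ^ k := by
        rw [← Real.exp_nat_mul, ← Real.exp_nat_mul, Nat.cast_choose_two]
        ring_nf

theorem one_le_pow_mul_one_sub_pow_choose_two {p D : ℝ} (hp : 0 ≤ p) (hp₁ : p < 1) {k l : ℕ}
    (hD : Real.exp (p * k / (2 * (1 - p))) ≤ D) (hl : l ≤ k) :
    1 ≤ D ^ l * (1 - p) ^ l.choose 2 := by
  have hp₁' : 0 < 1 - p := sub_pos.2 hp₁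
  have hlog : Real.exp (-(p / (1 - p))) ≤ 1 - p := by
    rw [Real.exp_neg]
    refine inv_le_of_inv_le₀ hp₁' ?_
    calc (1 - p)⁻¹ = p / (1 - p) + 1 := by field_simp; ring
      _ ≤ Real.exp (p / (1 - p)) := Real.add_one_le_exp _
  have hexponent : 0 ≤ l * (p * k / (2 * (1 - p))) + l.choose 2 * -(p / (1 - p)) := by
    have hl' : (l : ℝ) - 1 ≤ k := by
      have : (l : ℝ) ≤ k := Nat.cast_le.2 hl
      linarith
    have : l * (p * k / (2 * (1 - p))) + l.choose 2 * -(p / (1 - p)) =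
        l * p * (k - (l - 1)) / (2 * (1 - p)) := by
      rw [Nat.cast_choose_two]
      field_simp
      ring
    rw [this]
    have := sub_nonneg.2 hl'
    positivity
  calc 1 ≤ Real.exp (p * k / (2 * (1 - p))) ^ l * Real.exp (-(p / (1 - p))) ^ l.choose 2 := by
        rw [← Real.exp_nat_mul, ← Real.exp_nat_mul, ← Real.exp_add]
        exact Real.one_le_exp hexponent
    _ ≤ D ^ l * (1 - p) ^ l.choose 2 := by
        have := (Real.exp_pos _).le.trans hD
        gcongr

theorem one_div_natCeil_one_div_le {u : ℝ} (hu : 0 < u) : 1 / (⌈1 / u⌉₊ : ℝ) ≤ u :=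
  (one_div_le (Nat.cast_pos.2 (Nat.ceil_pos.2 (one_div_pos.2 hu))) hu).2 (Nat.le_ceil _)

theorem mul_one_sub_lt_one_div_natCeil_one_div {u : ℝ} (hu : 0 < u) :
    u * (1 - u) < 1 / (⌈1 / u⌉₊ : ℝ) := by
  have hm : (0 : ℝ) < ⌈1 / u⌉₊ := Nat.cast_pos.2 (Nat.ceil_pos.2 (one_div_pos.2 hu))
  have hceil : (⌈1 / u⌉₊ : ℝ) * u < 1 + u := by
    have := mul_lt_mul_of_pos_right (Nat.ceil_lt_add_one (one_div_pos.2 hu).le) hu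
    rwa [add_mul, one_div_mul_cancel hu.ne', one_mul] at this
  rw [lt_div_iff₀ hm]
  rcases le_or_gt (1 - u) 0 with h | h
  · nlinarith [mul_nonneg hm.le hu.le]
  · nlinarith

theorem tendsto_natDiv_div_natCast (m : ℕ) :
    Tendsto (fun n : ℕ => ((n / m : ℕ) : ℝ) / n) atTop (𝓝 (1 / m)) := by
  refine ((tendsto_nat_floor_mul_div_atTop (R := ℝ) (a := 1 / m) (by positivity)).comp
    tendsto_natCast_atTop_atTop).congr fun n => ?_
  rw [Function.comp_apply, one_div_mul_eq_div, Nat.floor_div_eq_div]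

end ElementaryEstimates

section RandomGraph

variable {n : ℕ} {p : unitInterval}

instance (p : unitInterval) : IsProbabilityMeasure (bernoulliMeasure p) := by
  constructor
  simp [bernoulliMeasure, ← ENNReal.ofReal_add p.2.1 (sub_nonneg.2 p.2.2)]

instance (n : ℕ) (p : unitInterval) : IsProbabilityMeasure (erdosRenyi n p) :=
  inferInstanceAs (IsProbabilityMeasure (Measure.pi _))

theorem erdosRenyi_real_forall_mem_eq_false (F : Finset (Sym2 (Fin n))) :
    (erdosRenyi n p).real {ω | ∀ e ∈ F, ω e = false} = (1 - p : ℝ) ^ F.card := by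
  have hset : {ω : Sym2 (Fin n) → Bool | ∀ e ∈ F, ω e = false} =
      Set.pi F fun _ => {false} := by
    ext ω
    simp [Set.mem_pi]
  have hfalse : bernoulliMeasure p {false} = ENNReal.ofReal (1 - p) := by
    simp [bernoulliMeasure]
  rw [Measure.real, hset, erdosRenyi, Measure.pi_pi_finset, Finset.prod_const, hfalse,
    ENNReal.toReal_pow, ENNReal.toReal_ofReal (sub_nonneg.2 p.2.2)]

/-- The pairs of distinct vertices of `S`; a graph is independent on `S` when none of them is an
edge. -/
def edgesIn {V : Type*} [DecidableEq V] (S : Finset V) : Finset (Sym2 V) :=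
  S.offDiag.image Sym2.mk.uncurry

section EdgesIn

variable {V : Type*} [DecidableEq V] (S T : Finset V)

theorem mem_edgesIn {u v : V} : s(u, v) ∈ edgesIn S ↔ u ∈ S ∧ v ∈ S ∧ u ≠ v := by
  simp only [edgesIn, Finset.mem_image, Finset.mem_offDiag, Prod.exists,
    Function.uncurry_apply_pair, Sym2.eq_iff]
  grind

theorem card_edgesIn : (edgesIn S).card = S.card.choose 2 :=
  Sym2.card_image_offDiag S

theorem edgesIn_inter_edgesIn : edgesIn S ∩ edgesIn T = edgesIn (S ∩ T) := by
  ext ⟨u, v⟩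
  simp only [Finset.mem_inter, mem_edgesIn]
  tauto

end EdgesIn

theorem isIndepSet_iff_forall_mem_edgesIn {ω : Sym2 (Fin n) → Bool} {S : Finset (Fin n)} :
    IsIndepSet n ω S ↔ ∀ e ∈ edgesIn S, ω e = false := by
  simp only [IsIndepSet, Sym2.forall, mem_edgesIn]
  grind

theorem measureReal_isIndepSet (S : Finset (Fin n)) :
    (erdosRenyi n p).real {ω | IsIndepSet n ω S} = (1 - p : ℝ) ^ S.card.choose 2 := by
  simp_rw [isIndepSet_iff_forall_mem_edgesIn, erdosRenyi_real_forall_mem_eq_false, card_edgesIn]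

theorem measureReal_isIndepSet_inter (S T : Finset (Fin n)) :
    (erdosRenyi n p).real ({ω | IsIndepSet n ω S} ∩ {ω | IsIndepSet n ω T}) *
        (1 - p : ℝ) ^ (S ∩ T).card.choose 2 =
      (1 - p : ℝ) ^ S.card.choose 2 * (1 - p : ℝ) ^ T.card.choose 2 := by
  have hset : {ω | IsIndepSet n ω S} ∩ {ω | IsIndepSet n ω T} =
      {ω | ∀ e ∈ edgesIn S ∪ edgesIn T, ω e = false} := by
    ext ω
    simp only [isIndepSet_iff_forall_mem_edgesIn, Finset.forall_mem_union]
    rfl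
  rw [hset, erdosRenyi_real_forall_mem_eq_false, ← card_edgesIn (S ∩ T), ← edgesIn_inter_edgesIn,
    ← pow_add, Finset.card_union_add_card_inter, card_edgesIn, card_edgesIn, pow_add]

theorem IsIndepSet.subset {ω : Sym2 (Fin n) → Bool} {S T : Finset (Fin n)}
    (hT : IsIndepSet n ω T) (hST : S ⊆ T) : IsIndepSet n ω S :=
  fun i hi j hj => hT i (hST hi) j (hST hj)

theorem isIndepSet_empty (ω : Sym2 (Fin n) → Bool) : IsIndepSet n ω ∅ := by
  simp [IsIndepSet]

theorem IsIndepSet.card_le_independenceNumber {ω : Sym2 (Fin n) → Bool} {S : Finset (Fin n)}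
    (hS : IsIndepSet n ω S) : S.card ≤ independenceNumber n ω := by
  classical
  exact Finset.le_sup (f := Finset.card) (Finset.mem_filter.2 ⟨Finset.mem_univ S, hS⟩)

theorem exists_isIndepSet_card_eq_independenceNumber (ω : Sym2 (Fin n) → Bool) :
    ∃ S, IsIndepSet n ω S ∧ S.card = independenceNumber n ω := by
  classical
  obtain ⟨S, hS, hcard⟩ := Finset.exists_mem_eq_sup
    (Finset.univ.filter fun S : Finset (Fin n) => IsIndepSet n ω S)
    ⟨∅, Finset.mem_filter.2 ⟨Finset.mem_univ _, isIndepSet_empty ω⟩⟩ Finset.card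
  exact ⟨S, (Finset.mem_filter.1 hS).2, by rw [independenceNumber]; convert hcard.symm⟩

section BlockIndependenceNumber

variable {ι : Type*}

open scoped Classical in
/-- The maximum cardinality of an independent set with at most one vertex in each block, a block
being a fibre of `b`. Unlike the independence number it depends on few exposure steps, so that it is
concentrated on the scale of the square root of the number of blocks. -/
noncomputable def blockIndependenceNumber (b : Fin n → ι) (ω : Sym2 (Fin n) → Bool) : ℕ :=
  (Finset.univ.filter fun S : Finset (Fin n) => IsIndepSet n ω S ∧ Set.InjOn b S).sup Finset.card

theorem IsIndepSet.card_le_blockIndependenceNumber {b : Fin n → ι} {ω : Sym2 (Fin n) → Bool}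
    {S : Finset (Fin n)} (hS : IsIndepSet n ω S) (hb : Set.InjOn b S) :
    S.card ≤ blockIndependenceNumber b ω := by
  classical
  exact Finset.le_sup (f := Finset.card) (Finset.mem_filter.2 ⟨Finset.mem_univ S, hS, hb⟩)

theorem exists_isIndepSet_card_eq_blockIndependenceNumber (b : Fin n → ι)
    (ω : Sym2 (Fin n) → Bool) :
    ∃ S : Finset (Fin n), IsIndepSet n ω S ∧ Set.InjOn b S ∧
      S.card = blockIndependenceNumber b ω := by
  classical
  obtain ⟨S, hS, hcard⟩ := Finset.exists_mem_eq_sup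
    (Finset.univ.filter fun S : Finset (Fin n) => IsIndepSet n ω S ∧ Set.InjOn b S)
    ⟨∅, Finset.mem_filter.2 ⟨Finset.mem_univ _, isIndepSet_empty ω, by simp⟩⟩ Finset.card
  obtain ⟨hindep, hb⟩ := (Finset.mem_filter.1 hS).2
  exact ⟨S, hindep, hb, by rw [blockIndependenceNumber]; convert hcard.symm⟩

theorem blockIndependenceNumber_le_independenceNumber (b : Fin n → ι) (ω : Sym2 (Fin n) → Bool) :
    blockIndependenceNumber b ω ≤ independenceNumber n ω := by
  obtain ⟨S, hS, -, hcard⟩ := exists_isIndepSet_card_eq_blockIndependenceNumber b ω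
  exact hcard ▸ hS.card_le_independenceNumber

variable [LinearOrder ι]

theorem blockIndependenceNumber_le_add_one {b : Fin n → ι} {i : ι} {ω ω' : Sym2 (Fin n) → Bool}
    (h : ∀ e : Sym2 (Fin n), (e.map b).sup ≠ i → ω e = ω' e) :
    blockIndependenceNumber b ω ≤ blockIndependenceNumber b ω' + 1 := by
  obtain ⟨S, hS, hb, hcard⟩ := exists_isIndepSet_card_eq_blockIndependenceNumber b ω
  have hfiber : (S.filter fun v => b v = i).card ≤ 1 :=
    Finset.card_le_one.2 fun u hu v hv => by
      rw [Finset.mem_filter] at hu hv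
      exact hb hu.1 hv.1 (hu.2.trans hv.2.symm)
  have hrest : IsIndepSet n ω' (S.filter fun v => ¬ b v = i) := fun u hu v hv huv => by
    rw [Finset.mem_filter] at hu hv
    rw [← h s(u, v) (by grind [Sym2.map_mk, Sym2.sup_mk]), hS u hu.1 v hv.1 huv]
  have hle := hrest.card_le_blockIndependenceNumber
    (hb.mono (Finset.coe_subset.2 (Finset.filter_subset _ S)))
  have hsplit := Finset.card_filter_add_card_filter_not (s := S) fun v => b v = i
  omega

theorem abs_blockIndependenceNumber_sub_le_one {b : Fin n → ι} {i : ι}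
    {ω ω' : Sym2 (Fin n) → Bool} (h : ∀ e : Sym2 (Fin n), (e.map b).sup ≠ i → ω e = ω' e) :
    |(blockIndependenceNumber b ω : ℝ) - blockIndependenceNumber b ω'| ≤ 1 := by
  have hle := blockIndependenceNumber_le_add_one h
  have hge := blockIndependenceNumber_le_add_one fun e he => (h e he).symm
  rw [abs_sub_le_iff, sub_le_iff_le_add', sub_le_iff_le_add']
  exact ⟨mod_cast hle, mod_cast hge⟩

/-- Vertex exposure, one block at a time: step `i` reveals the edges whose larger end block is
`i`. -/
theorem hasSubgaussianMGF_blockIndependenceNumber [Fintype ι] (b : Fin n → ι) :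
    HasSubgaussianMGF
      (fun ω => (blockIndependenceNumber b ω : ℝ) -
        ∫ ω', (blockIndependenceNumber b ω' : ℝ) ∂erdosRenyi n p)
      (Fintype.card ι / 4) (erdosRenyi n p) := by
  have hc : ∑ _i : ι, ((1 : ℝ≥0) / 2) ^ 2 = (Fintype.card ι / 4 : ℝ≥0) := by
    norm_num [div_eq_mul_inv]
  rw [← hc]
  exact hasSubgaussianMGF_pi_of_blockwise_abs_sub_le Finset.univ (fun _ => bernoulliMeasure p)
    (g := fun e : Sym2 (Fin n) => (e.map b).sup) (fun _ => Finset.mem_univ _) .of_discrete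
    fun i _ ω ω' h => by
      simpa only [NNReal.coe_one] using abs_blockIndependenceNumber_sub_le_one h

theorem measureReal_blockIndependenceNumber_le_mul_ge_le_exp [Fintype ι] (b : Fin n → ι) {δ : ℝ}
    (hδ : 0 ≤ δ) :
    (erdosRenyi n p).real {ω | (blockIndependenceNumber b ω : ℝ) ≤ (1 - δ) * Fintype.card ι} *
        (erdosRenyi n p).real {ω | (Fintype.card ι : ℝ) ≤ blockIndependenceNumber b ω} ≤
      Real.exp (-δ ^ 2 * Fintype.card ι) := by
  have hgap : (1 - δ) * Fintype.card ι ≤ Fintype.card ι :=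
    mul_le_of_le_one_left (Nat.cast_nonneg _) (sub_le_self 1 hδ)
  refine (measureReal_le_mul_measureReal_ge_le_exp
    (hasSubgaussianMGF_blockIndependenceNumber b) hgap).trans_eq (congrArg Real.exp ?_)
  simp only [NNReal.coe_div, NNReal.coe_natCast, NNReal.coe_ofNat]
  field_simp
  ring

end BlockIndependenceNumber

section Transversal

theorem injective_apply_mk {V ι κ : Type*} (g : ι × κ ↪ V) (σ : ι → κ) :
    Function.Injective fun i => g (i, σ i) :=
  fun _ _ h => congrArg Prod.fst (g.injective h)

variable {V ι κ : Type*} [DecidableEq V] [Fintype ι] (g : ι × κ ↪ V) (σ τ : ι → κ)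

/-- The vertex set containing from each block `{g (i, a) | a}` the vertex with label `σ i`. These
sets are the candidates for large independent sets in the second moment argument. -/
def transversal : Finset V :=
  Finset.univ.image fun i => g (i, σ i)

theorem card_transversal : (transversal g σ).card = Fintype.card ι := by
  rw [transversal, Finset.card_image_of_injective _ (injective_apply_mk g σ), Finset.card_univ]

theorem card_transversal_inter [DecidableEq κ] :
    (transversal g σ ∩ transversal g τ).card = (Finset.univ.filter fun i => σ i = τ i).card := by
  have hinter : transversal g σ ∩ transversal g τ =
      (Finset.univ.filter fun i => σ i = τ i).image fun i => g (i, σ i) := by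
    ext v
    simp only [transversal, Finset.mem_inter, Finset.mem_image, Finset.mem_univ, Finset.mem_filter,
      true_and]
    constructor
    · rintro ⟨⟨i, rfl⟩, j, hj⟩
      obtain ⟨rfl, hτ⟩ := Prod.mk.inj (g.injective hj)
      exact ⟨j, hτ.symm, rfl⟩
    · rintro ⟨i, hi, rfl⟩
      exact ⟨⟨i, rfl⟩, i, by rw [hi]⟩
  rw [hinter, Finset.card_image_of_injective _ (injective_apply_mk g σ)]

theorem injOn_transversal {b : V → ι} (hb : ∀ x, b (g x) = x.1) :
    Set.InjOn b (transversal g σ) := by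
  intro u hu v hv huv
  simp only [transversal, Finset.coe_image, Finset.coe_univ, Set.image_univ] at hu hv
  obtain ⟨i, rfl⟩ := hu
  obtain ⟨j, rfl⟩ := hv
  simp only [hb] at huv
  rw [huv]

end Transversal

section LowerTail

variable {ι κ : Type*} [Fintype ι] {D : ℝ}

theorem measureReal_isIndepSet_transversal_inter_le [DecidableEq κ] (g : ι × κ ↪ Fin n)
    (hD : ∀ l ≤ Fintype.card ι, 1 ≤ D ^ l * (1 - p : ℝ) ^ l.choose 2) (σ τ : ι → κ) :
    (erdosRenyi n p).real ({ω | IsIndepSet n ω (transversal g σ)} ∩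
        {ω | IsIndepSet n ω (transversal g τ)}) ≤
      ((1 - p : ℝ) ^ (Fintype.card ι).choose 2) ^ 2 *
        D ^ (Finset.univ.filter fun i => σ i = τ i).card := by
  have hjoint := measureReal_isIndepSet_inter (p := p) (transversal g σ) (transversal g τ)
  rw [card_transversal, card_transversal, card_transversal_inter, ← sq] at hjoint
  set l := (Finset.univ.filter fun i => σ i = τ i).card
  rw [← hjoint, mul_assoc, mul_comm _ (D ^ l)]
  exact le_mul_of_one_le_right measureReal_nonneg (hD l (Finset.card_filter_le _ _))

variable [Fintype κ] [Nonempty κ]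

theorem sum_measureReal_isIndepSet_transversal_inter_le [DecidableEq ι] (g : ι × κ ↪ Fin n)
    (hD : ∀ l ≤ Fintype.card ι, 1 ≤ D ^ l * (1 - p : ℝ) ^ l.choose 2) (hD₀ : 0 ≤ D) :
    ∑ σ : ι → κ, ∑ τ : ι → κ, (erdosRenyi n p).real ({ω | IsIndepSet n ω (transversal g σ)} ∩
        {ω | IsIndepSet n ω (transversal g τ)}) ≤
      ((Fintype.card κ : ℝ) ^ Fintype.card ι * (1 - p : ℝ) ^ (Fintype.card ι).choose 2) ^ 2 *
        (1 + D / Fintype.card κ) ^ Fintype.card ι := by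
  let := Classical.decEq κ
  set k := Fintype.card ι
  set m : ℝ := (Fintype.card κ : ℝ) with hm
  set q : ℝ := (1 - p : ℝ) ^ k.choose 2
  have hm₁ : 1 ≤ m := Nat.one_le_cast.2 Fintype.card_pos
  have hbase : m - 1 + D ≤ m * (1 + D / m) := by
    rw [mul_add, mul_div_cancel₀ D (by positivity)]
    linarith
  calc _ ≤ ∑ σ : ι → κ, ∑ τ : ι → κ, q ^ 2 * D ^ (Finset.univ.filter fun i => σ i = τ i).card :=
        Finset.sum_le_sum fun σ _ => Finset.sum_le_sum fun τ _ =>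
          measureReal_isIndepSet_transversal_inter_le g hD σ τ
    _ = m ^ k * (q ^ 2 * (m - 1 + D) ^ k) := by
        simp only [← Finset.mul_sum, sum_pow_card_filter_eq, Finset.sum_const, Finset.card_univ,
          Fintype.card_fun, nsmul_eq_mul, Nat.cast_pow, hm, k, mul_left_comm (q ^ 2)]
    _ ≤ m ^ k * (q ^ 2 * (m * (1 + D / m)) ^ k) := by
        have : 0 ≤ m - 1 + D := by linarith
        gcongr
    _ = (m ^ k * q) ^ 2 * (1 + D / m) ^ k := by
        rw [mul_pow]
        ring

theorem one_le_measureReal_exists_isIndepSet_transversal_mul (g : ι × κ ↪ Fin n)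
    (hD : ∀ l ≤ Fintype.card ι, 1 ≤ D ^ l * (1 - p : ℝ) ^ l.choose 2) (hD₀ : 0 ≤ D) :
    1 ≤ (erdosRenyi n p).real {ω | ∃ σ, IsIndepSet n ω (transversal g σ)} *
      (1 + D / Fintype.card κ) ^ Fintype.card ι := by
  let := Classical.decEq ι
  have hchung := sq_sum_measureReal_le (μ := erdosRenyi n p)
    (A := fun σ => {ω | IsIndepSet n ω (transversal g σ)}) fun _ => .of_discrete
  simp only [measureReal_isIndepSet, card_transversal, ← Set.ofPred_exists, Finset.sum_const,
    Finset.card_univ, Fintype.card_fun, nsmul_eq_mul, Nat.cast_pow] at hchung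
  have hbound := hchung.trans <| mul_le_mul_of_nonneg_left
    (sum_measureReal_isIndepSet_transversal_inter_le g hD hD₀) measureReal_nonneg
  rw [mul_left_comm] at hbound
  have hq : 0 < (1 - p : ℝ) ^ (Fintype.card ι).choose 2 :=
    pos_of_mul_pos_right (one_pos.trans_le (hD _ le_rfl)) (pow_nonneg hD₀ _)
  have : 0 < (Fintype.card κ : ℝ) := Nat.cast_pos.2 Fintype.card_pos
  exact one_le_of_le_mul_left₀ (by positivity) hbound

theorem measureReal_independenceNumber_lt_le_exp {k m : ℕ} (hk : 0 < k) (hm : 0 < m)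
    (hkm : k * m ≤ n) (hD : ∀ l ≤ k, 1 ≤ D ^ l * (1 - p : ℝ) ^ l.choose 2) (hD₀ : 0 ≤ D) {δ : ℝ}
    (hδ : 0 ≤ δ) :
    (erdosRenyi n p).real {ω | (independenceNumber n ω : ℝ) < (1 - δ) * k} ≤
      Real.exp (-(δ ^ 2 - D / m) * k) := by
  have : NeZero k := ⟨hk.ne'⟩
  have : NeZero m := ⟨hm.ne'⟩
  let g : Fin k × Fin m ↪ Fin n := finProdFinEquiv.toEmbedding.trans (Fin.castLEEmb hkm)
  let b : Fin n → Fin k := Function.extend g Prod.fst fun _ => 0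
  have hb (x : Fin k × Fin m) : b (g x) = x.1 := g.injective.extend_apply _ _ x
  let Z (ω : Sym2 (Fin n) → Bool) : ℝ := blockIndependenceNumber b ω
  have hconc := measureReal_blockIndependenceNumber_le_mul_ge_le_exp (p := p) b hδ
  rw [Fintype.card_fin] at hconc
  have hexists : (erdosRenyi n p).real {ω | ∃ σ, IsIndepSet n ω (transversal g σ)} ≤
      (erdosRenyi n p).real {ω | k ≤ Z ω} := by
    refine measureReal_mono (Set.ofPred_subset_ofPred.2 ?_)
    rintro ω ⟨σ, hσ⟩
    have := hσ.card_le_blockIndependenceNumber (injOn_transversal g σ hb)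
    rw [card_transversal, Fintype.card_fin] at this
    exact Nat.cast_le.2 this
  have hsecond : 1 ≤ (erdosRenyi n p).real {ω | k ≤ Z ω} * Real.exp (D / m * k) := by
    have := one_le_measureReal_exists_isIndepSet_transversal_mul g
      (by rwa [Fintype.card_fin]) hD₀ (p := p)
    rw [Fintype.card_fin, Fintype.card_fin] at this
    refine this.trans (mul_le_mul hexists ?_ (by positivity) measureReal_nonneg)
    rw [mul_comm, Real.exp_nat_mul]
    gcongr
    linarith [Real.add_one_le_exp (D / m)]
  calc (erdosRenyi n p).real {ω | (independenceNumber n ω : ℝ) < (1 - δ) * k}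
      ≤ (erdosRenyi n p).real {ω | Z ω ≤ (1 - δ) * k} :=
        measureReal_mono <| Set.ofPred_subset_ofPred.2 fun ω hω =>
          (Nat.cast_le.2 (blockIndependenceNumber_le_independenceNumber b ω)).trans hω.le
    _ ≤ (erdosRenyi n p).real {ω | Z ω ≤ (1 - δ) * k} *
          ((erdosRenyi n p).real {ω | k ≤ Z ω} * Real.exp (D / m * k)) :=
        le_mul_of_one_le_right measureReal_nonneg hsecond
    _ ≤ Real.exp (-δ ^ 2 * k) * Real.exp (D / m * k) := by
        rw [← mul_assoc]
        gcongr
    _ = Real.exp (-(δ ^ 2 - D / m) * k) := by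
        rw [← Real.exp_add]
        ring_nf

end LowerTail

section UpperTail

theorem measureReal_le_independenceNumber_le (k : ℕ) :
    (erdosRenyi n p).real {ω | k ≤ independenceNumber n ω} ≤
      n.choose k * (1 - p : ℝ) ^ k.choose 2 := by
  have hsub : {ω | k ≤ independenceNumber n ω} ⊆
      ⋃ S ∈ Finset.univ.powersetCard k, {ω | IsIndepSet n ω S} := by
    intro ω hω
    obtain ⟨T, hT, hcard⟩ := exists_isIndepSet_card_eq_independenceNumber ω
    obtain ⟨S, hST, hS⟩ := Finset.exists_subset_card_eq (hω.trans_eq hcard.symm)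
    exact Set.mem_biUnion (Finset.mem_powersetCard_univ.2 hS) (hT.subset hST)
  refine (measureReal_mono hsub (measure_ne_top _ _)).trans
    ((measureReal_biUnion_finset_le _ _).trans_eq ?_)
  calc ∑ S ∈ Finset.univ.powersetCard k, (erdosRenyi n p).real {ω | IsIndepSet n ω S}
      = ∑ _S ∈ (Finset.univ : Finset (Fin n)).powersetCard k, (1 - p : ℝ) ^ k.choose 2 :=
        Finset.sum_congr rfl fun S hS => by
          rw [measureReal_isIndepSet, (Finset.mem_powersetCard.1 hS).2]
    _ = n.choose k * (1 - p : ℝ) ^ k.choose 2 := by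
        rw [Finset.sum_const, Finset.card_powersetCard, Finset.card_univ, Fintype.card_fin,
          nsmul_eq_mul]

theorem measureReal_le_independenceNumber_le_pow (k : ℕ) :
    (erdosRenyi n p).real {ω | k ≤ independenceNumber n ω} ≤
      (Real.exp (1 - p * (k - 1) / 2) * (n / k)) ^ k := by
  calc (erdosRenyi n p).real {ω | k ≤ independenceNumber n ω}
      ≤ n.choose k * (1 - p : ℝ) ^ k.choose 2 := measureReal_le_independenceNumber_le k
    _ ≤ (Real.exp 1 * (n / k)) ^ k * Real.exp (-(p * (k - 1) / 2)) ^ k :=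
        mul_le_mul (choose_le_exp_one_mul_div_pow n k) (one_sub_pow_choose_two_le p.2.2 k)
          (pow_nonneg (sub_nonneg.2 p.2.2) _) (by positivity)
    _ = (Real.exp (1 - p * (k - 1) / 2) * (n / k)) ^ k := by
        rw [← mul_pow, mul_right_comm, ← Real.exp_add, ← sub_eq_add_neg]

end UpperTail

end RandomGraph

section ManyVertices

variable {d x : ℝ}

theorem eventually_div_mem_unitInterval (hd : 0 ≤ d) :
    ∀ᶠ n : ℕ in atTop, d / n ∈ unitInterval := by
  filter_upwards [tendsto_natCast_atTop_atTop.eventually_ge_atTop d] with n hn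
  exact ⟨by positivity, div_le_one_of_le₀ hn n.cast_nonneg⟩

theorem tendsto_measureReal_lt_independenceNumber (hd : 0 ≤ d)
    (hdx : Real.exp (1 - d * x / 2) < x) :
    Tendsto (fun n : ℕ => (erdosRenyi n (d / n)).real {ω | x * n < independenceNumber n ω})
      atTop (𝓝 0) := by
  have hx : 0 < x := (Real.exp_pos _).trans hdx
  obtain ⟨r, hr, hrx⟩ := exists_between hdx
  have hr₀ : 0 < r := (Real.exp_pos _).trans hr
  have hbase : ∀ᶠ n : ℕ in atTop, Real.exp (1 - d * x / 2 + d / n / 2) < r := by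
    have : Tendsto (fun n : ℕ => Real.exp (1 - d * x / 2 + d / n / 2)) atTop
        (𝓝 (Real.exp (1 - d * x / 2 + 0 / 2))) :=
      (((tendsto_const_div_atTop_nhds_zero_nat d).div_const 2).const_add _).rexp
    exact this.eventually_lt_const (by simpa using hr)
  have hceil : Tendsto (fun n : ℕ => (r / x) ^ ⌈x * n⌉₊) atTop (𝓝 0) :=
    (tendsto_pow_atTop_nhds_zero_of_lt_one (by positivity) ((div_lt_one hx).2 hrx)).comp <|
      tendsto_nat_ceil_atTop.comp (tendsto_natCast_atTop_atTop.const_mul_atTop hx)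
  refine squeeze_zero' (.of_forall fun _ => measureReal_nonneg) ?_ hceil
  filter_upwards [hbase, eventually_div_mem_unitInterval hd, eventually_gt_atTop 0] with n hn hp hn₀
  lift d / n to unitInterval using hp with p hpd
  set k := ⌈x * n⌉₊
  have hn₀' : (0 : ℝ) < n := Nat.cast_pos.2 hn₀
  have hk : x * n ≤ k := Nat.le_ceil _
  have hexp : Real.exp (1 - p * (k - 1) / 2) ≤ r := by
    refine le_trans (Real.exp_le_exp.2 ?_) hn.le
    have : d * x ≤ p * k := by
      calc d * x = p * (x * n) := by rw [hpd]; field_simp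
        _ ≤ p * k := mul_le_mul_of_nonneg_left hk p.2.1
    linarith
  have hdiv : (n / k : ℝ) ≤ 1 / x := by
    rw [div_le_div_iff₀ ((mul_pos hx hn₀').trans_le hk) hx]
    linarith
  calc (erdosRenyi n p).real {ω | x * n < independenceNumber n ω}
      ≤ (erdosRenyi n p).real {ω | k ≤ independenceNumber n ω} :=
        measureReal_mono <| Set.ofPred_subset_ofPred.2 fun ω hω => Nat.ceil_le.2 hω.le
    _ ≤ (Real.exp (1 - p * (k - 1) / 2) * (n / k)) ^ k := measureReal_le_independenceNumber_le_pow k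
    _ ≤ (r * (1 / x)) ^ k := by gcongr
    _ = (r / x) ^ k := by rw [mul_one_div]

theorem eventually_one_le_pow_mul_one_sub_pow_choose_two {D : ℝ} {m : ℕ} (hd : 0 ≤ d)
    (hdD : Real.exp (d / (2 * m)) < D) :
    ∀ᶠ n : ℕ in atTop, ∀ l ≤ n / m, 1 ≤ D ^ l * (1 - d / n) ^ l.choose 2 := by
  have hp : Tendsto (fun n : ℕ => d / n) atTop (𝓝 0) := tendsto_const_div_atTop_nhds_zero_nat d
  have hlim : Tendsto (fun n : ℕ => Real.exp (d / m / (2 * (1 - d / n)))) atTop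
      (𝓝 (Real.exp (d / m / (2 * (1 - 0))))) :=
    (tendsto_const_nhds.div ((hp.const_sub 1).const_mul 2) (by norm_num)).rexp
  have hD : Real.exp (d / m / (2 * (1 - 0))) < D := by
    rwa [sub_zero, mul_one, div_div, mul_comm (m : ℝ)]
  filter_upwards [hlim.eventually_lt_const hD, hp.eventually_lt_const one_pos,
    eventually_gt_atTop 0] with n hDn hlt hn l hl
  refine one_le_pow_mul_one_sub_pow_choose_two (by positivity) hlt (le_trans ?_ hDn.le) hl
  have hpk : d / n * (n / m : ℕ) ≤ d / m := by
    calc d / n * (n / m : ℕ) ≤ d / n * (n / m) := by gcongr; exact Nat.cast_div_le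
      _ = d / m := by field_simp
  have := sub_pos.2 hlt
  gcongr

theorem tendsto_measureReal_independenceNumber_lt {D δ : ℝ} {m : ℕ} (hd : 0 ≤ d) (hm : 0 < m)
    (hdD : Real.exp (d / (2 * m)) < D) (hDδ : D / m < δ ^ 2) (hδ : 0 ≤ δ) (hx : x < (1 - δ) / m) :
    Tendsto (fun n : ℕ => (erdosRenyi n (d / n)).real {ω | (independenceNumber n ω : ℝ) < x * n})
      atTop (𝓝 0) := by
  have hdiv : Tendsto (fun n : ℕ => n / m) atTop atTop := Nat.tendsto_div_const_atTop hm.ne'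
  have hexp : Tendsto (fun n : ℕ => Real.exp (-(δ ^ 2 - D / m) * (n / m : ℕ))) atTop (𝓝 0) :=
    Real.tendsto_exp_atBot.comp <| (tendsto_natCast_atTop_atTop.comp hdiv).const_mul_atTop_of_neg
      (neg_lt_zero.2 (sub_pos.2 hDδ))
  have hblocks : ∀ᶠ n : ℕ in atTop, x < (1 - δ) * (((n / m : ℕ) : ℝ) / n) :=
    ((tendsto_natDiv_div_natCast m).const_mul (1 - δ)).eventually_const_lt (by rwa [mul_one_div])
  refine squeeze_zero' (.of_forall fun _ => measureReal_nonneg) ?_ hexp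
  filter_upwards [hblocks, eventually_one_le_pow_mul_one_sub_pow_choose_two hd hdD,
    eventually_div_mem_unitInterval hd, hdiv.eventually_gt_atTop 0, eventually_gt_atTop 0]
    with n hxn hD hp hk hn
  rw [← mul_div_assoc, lt_div_iff₀ (Nat.cast_pos.2 hn)] at hxn
  lift d / n to unitInterval using hp with p
  exact (measureReal_mono <| Set.ofPred_subset_ofPred.2 fun ω hω => hω.trans hxn).trans <|
    measureReal_independenceNumber_lt_le_exp hk hm (Nat.div_mul_le_self n m) hD
      ((Real.exp_pos _).trans hdD).le hδ

end ManyVertices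

section LargeDegree

variable {ε : ℝ}

theorem eventually_exp_one_sub_lt (hε : 0 < ε) :
    ∀ᶠ d : ℝ in atTop,
      Real.exp (1 - d * ((2 + ε) * (Real.log d / d)) / 2) < (2 + ε) * (Real.log d / d) := by
  filter_upwards [eventually_gt_atTop 0, Real.tendsto_log_atTop.eventually_ge_atTop 1,
    Real.tendsto_log_atTop.eventually_ge_atTop (2 / ε)] with d hd hlog hlogε
  rw [div_le_iff₀ hε] at hlogε
  calc Real.exp (1 - d * ((2 + ε) * (Real.log d / d)) / 2)
      = Real.exp (1 - (2 + ε) * Real.log d / 2) := by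
        rw [mul_left_comm, mul_div_cancel₀ _ hd.ne']
    _ ≤ Real.exp (-Real.log d) := Real.exp_le_exp.2 (by linarith)
    _ = 1 / d := by rw [Real.exp_neg, Real.exp_log hd, one_div]
    _ < (2 + ε) * Real.log d / d := by
        gcongr
        nlinarith
    _ = (2 + ε) * (Real.log d / d) := mul_div_assoc _ _ _

theorem exists_blockSize {d : ℝ} (hε : 0 < ε) (hε₂ : ε < 2) (hd : 0 < d) (hlog : 0 < Real.log d)
    (hu : (2 - ε / 2) * (Real.log d / d) < ε / 8)
    (hD : (2 - ε / 2) * (Real.log d * Real.exp (-(ε / 8) * Real.log d)) < (ε / 8) ^ 2) :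
    ∃ m : ℕ, 0 < m ∧ ∃ D, Real.exp (d / (2 * m)) < D ∧ D / m < (ε / 8) ^ 2 ∧
      (2 - ε) * (Real.log d / d) < (1 - ε / 8) / m := by
  set L := Real.log d
  set u := (2 - ε / 2) * (L / d) with hu_def
  have hu₀ : 0 < u := mul_pos (by linarith) (by positivity)
  have hmu := one_div_natCeil_one_div_le hu₀
  have hum := mul_one_sub_lt_one_div_natCeil_one_div hu₀
  refine ⟨⌈1 / u⌉₊, Nat.ceil_pos.2 (one_div_pos.2 hu₀), Real.exp ((1 - ε / 8) * L), ?_, ?_, ?_⟩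
  · refine Real.exp_lt_exp.2 ?_
    calc d / (2 * ⌈1 / u⌉₊) = d / 2 * (1 / ⌈1 / u⌉₊) := by ring
      _ ≤ d / 2 * u := by gcongr
      _ = (1 - ε / 4) * L := by rw [hu_def]; field_simp; ring
      _ < (1 - ε / 8) * L := by gcongr; linarith
  · calc Real.exp ((1 - ε / 8) * L) / ⌈1 / u⌉₊
        = Real.exp ((1 - ε / 8) * L) * (1 / ⌈1 / u⌉₊) := by ring
      _ ≤ Real.exp ((1 - ε / 8) * L) * u := by gcongr
      _ = (2 - ε / 2) * (L * Real.exp (-(ε / 8) * L)) := by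
        rw [sub_mul, one_mul, sub_eq_add_neg, Real.exp_add, Real.exp_log hd, hu_def, neg_mul]
        field_simp
      _ < (ε / 8) ^ 2 := hD
  · calc (2 - ε) * (L / d) ≤ (1 - ε / 8) * ((1 - ε / 8) * (2 - ε / 2)) * (L / d) := by
          gcongr
          nlinarith [mul_pos hε hε]
      _ = (1 - ε / 8) * (u * (1 - ε / 8)) := by ring
      _ ≤ (1 - ε / 8) * (u * (1 - u)) := by
          gcongr
          linarith
      _ < (1 - ε / 8) * (1 / ⌈1 / u⌉₊) := by
          gcongr
          linarith
      _ = (1 - ε / 8) / ⌈1 / u⌉₊ := mul_one_div _ _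

theorem eventually_exists_blockSize (hε : 0 < ε) (hε₂ : ε < 2) :
    ∀ᶠ d : ℝ in atTop, ∃ m : ℕ, 0 < m ∧ ∃ D, Real.exp (d / (2 * m)) < D ∧
      D / m < (ε / 8) ^ 2 ∧ (2 - ε) * (Real.log d / d) < (1 - ε / 8) / m := by
  have hu : Tendsto (fun d => (2 - ε / 2) * (Real.log d / d)) atTop (𝓝 0) := by
    simpa using Real.isLittleO_log_id_atTop.tendsto_div_nhds_zero.const_mul (2 - ε / 2)
  have hD : Tendsto (fun d => (2 - ε / 2) * (Real.log d * Real.exp (-(ε / 8) * Real.log d)))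
      atTop (𝓝 0) := by
    simpa using ((tendsto_rpow_mul_exp_neg_mul_atTop_nhds_zero 1 (ε / 8) (by positivity)).comp
      Real.tendsto_log_atTop).const_mul (2 - ε / 2)
  filter_upwards [eventually_gt_atTop 0, Real.tendsto_log_atTop.eventually_gt_atTop 0,
    hu.eventually_lt_const (by positivity : 0 < ε / 8),
    hD.eventually_lt_const (by positivity : 0 < (ε / 8) ^ 2)] with d hd hlog hud hDd
  exact exists_blockSize hε hε₂ hd hlog hud hDd

theorem eventually_tendsto_measureReal_lt_independenceNumber (hε : 0 < ε) :
    ∀ᶠ d : ℝ in atTop, Tendsto (fun n : ℕ => (erdosRenyi n (d / n)).real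
      {ω | (2 + ε) * (Real.log d / d) * n < independenceNumber n ω}) atTop (𝓝 0) := by
  filter_upwards [eventually_exp_one_sub_lt hε, eventually_ge_atTop 0] with d hlt hd
  exact tendsto_measureReal_lt_independenceNumber hd hlt

theorem eventually_tendsto_measureReal_independenceNumber_lt (hε : 0 < ε) :
    ∀ᶠ d : ℝ in atTop, Tendsto (fun n : ℕ => (erdosRenyi n (d / n)).real
      {ω | (independenceNumber n ω : ℝ) < (2 - ε) * (Real.log d / d) * n}) atTop (𝓝 0) := by
  rcases lt_or_ge ε 2 with hε₂ | hε₂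
  · filter_upwards [eventually_exists_blockSize hε hε₂, eventually_ge_atTop 0] with d hblocks hd
    obtain ⟨m, hm, D, hdD, hDm, hlt⟩ := hblocks
    exact tendsto_measureReal_independenceNumber_lt hd hm hdD hDm (by positivity) hlt
  · filter_upwards [eventually_ge_atTop 1] with d hd
    have hempty (n : ℕ) :
        {ω | (independenceNumber n ω : ℝ) < (2 - ε) * (Real.log d / d) * n} = ∅ := by
      have hneg : (2 - ε) * (Real.log d / d) * n ≤ 0 :=
        mul_nonpos_of_nonpos_of_nonneg (mul_nonpos_of_nonpos_of_nonneg (sub_nonpos.2 hε₂)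
          (div_nonneg (Real.log_nonneg hd) (by linarith))) (Nat.cast_nonneg n)
      exact Set.eq_empty_of_forall_notMem fun ω => not_lt.2 (hneg.trans (Nat.cast_nonneg _))
    simp [hempty]

end LargeDegree

/-- for every `ε > 0` there is `d₀` such that for all `d ≥ d₀`, whp as
`n → ∞` the independence number of `G(n,d/n)` lies between `(2-ε)·(log d/d)·n`
and `(2+ε)·(log d/d)·n`. -/
theorem independence_number_sparse_er (ε : ℝ) (hε : 0 < ε) :
    ∃ d₀ : ℝ, ∀ d : ℝ, d₀ ≤ d →
      Tendsto
        (fun n : ℕ =>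
          erdosRenyi n (d / n)
            {ω | (2 - ε) * (Real.log d / d) * n ≤ (independenceNumber n ω : ℝ) ∧
                 (independenceNumber n ω : ℝ) ≤ (2 + ε) * (Real.log d / d) * n})
        atTop (𝓝 1) := by
  refine eventually_atTop.1 ?_
  filter_upwards [eventually_tendsto_measureReal_independenceNumber_lt hε,
    eventually_tendsto_measureReal_lt_independenceNumber hε, eventually_ge_atTop 0]
    with d hlower hupper hd
  have hprob : ∀ᶠ n : ℕ in atTop, IsProbabilityMeasure (erdosRenyi n (d / n)) := by
    filter_upwards [eventually_div_mem_unitInterval hd] with n hn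
    lift d / n to unitInterval using hn with p
    infer_instance
  simp only [← not_le] at hlower hupper
  exact tendsto_measure_inter_one hprob (fun _ => .of_discrete) (fun _ => .of_discrete)
    hlower hupper
end
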